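/- Let γ : ℝ → ℓ² be defined by γ(θ) = √2 (cos θ, sin θ, (1/3)cos 3θ, (1/3)sin 3θ, (1/5)cos 5θ, (1/5)sin 5θ, …). Then for all θ₁, θ₂ ∈ ℝ, ‖γ(θ₁) − γ(θ₂)‖²_{ℓ²} = 4 Σ_{k odd, k ≥ 1} (1 − cos(k(θ₁ − θ₂))) / k². In particular, the ℓ² distance between γ(θ₁) and γ(θ₂) depends only on θ₁ − θ₂. -/

import Mathlib

open Real

/-- The coordinates of the MDS embedding `γ` of the geodesic circle into `ℓ²`:
for `j = 0, 1, 2, …`, coordinate `2j` is `(√2/(2j+1)) cos((2j+1)θ)` and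
coordinate `2j+1` is `(√2/(2j+1)) sin((2j+1)θ)`. -/
noncomputable def mdsCircleCoord (θ : ℝ) (i : ℕ) : ℝ :=
  if i % 2 = 0 then Real.sqrt 2 / ((i : ℝ) + 1) * Real.cos (((i : ℝ) + 1) * θ)
  else Real.sqrt 2 / (i : ℝ) * Real.sin ((i : ℝ) * θ)

/-!
Coordinates `2j` and `2j + 1` of `γ` together trace a circle of radius `√2 / (2j + 1)` at angular
speed `2j + 1`, so they contribute to `‖γ(θ₁) - γ(θ₂)‖²` the squared length of a chord of that
circle, which depends only on `θ₁ - θ₂`. Grouping the series into these pairs is harmless because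
its terms are nonnegative.
-/

theorem cos_sub_cos_sq_add_sin_sub_sin_sq (x y : ℝ) :
    (cos x - cos y) ^ 2 + (sin x - sin y) ^ 2 = 2 * (1 - cos (x - y)) := by
  rw [cos_sub]
  linear_combination sin_sq_add_cos_sq x + sin_sq_add_cos_sq y

theorem hasSum_of_hasSum_even_add_odd_of_nonneg {f : ℕ → ℝ} {s : ℝ} (f_nonneg : ∀ i, 0 ≤ f i)
    (hf : HasSum (fun j ↦ f (2 * j) + f (2 * j + 1)) s) : HasSum f s := by
  have even_summable : Summable fun j ↦ f (2 * j) :=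
    hf.summable.of_nonneg_of_le (fun _ ↦ f_nonneg _)
      fun _ ↦ le_add_of_nonneg_right (f_nonneg _)
  have odd_summable : Summable fun j ↦ f (2 * j + 1) :=
    hf.summable.of_nonneg_of_le (fun _ ↦ f_nonneg _)
      fun _ ↦ le_add_of_nonneg_left (f_nonneg _)
  rw [hf.unique (even_summable.hasSum.add odd_summable.hasSum)]
  exact even_summable.hasSum.even_add_odd odd_summable.hasSum

theorem summable_one_div_two_mul_add_one_pow {p : ℕ} (hp : 1 < p) :
    Summable fun j : ℕ ↦ 1 / (2 * (j : ℝ) + 1) ^ p := by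
  have odd_injective : Function.Injective fun j : ℕ ↦ 2 * j + 1 := fun _ _ h ↦ by simpa using h
  simpa [Function.comp_def] using
    (summable_one_div_nat_pow.mpr hp).comp_injective odd_injective

theorem summable_one_sub_cos_div {ι : Type*} {w : ι → ℝ} (x : ι → ℝ)
    (hw : Summable fun i ↦ 1 / w i) : Summable fun i ↦ (1 - cos (x i)) / w i := by
  refine (hw.norm.mul_left 2).of_norm_bounded fun i ↦ ?_
  have one_sub_cos_le : ‖1 - cos (x i)‖ ≤ 2 := by
    rw [norm_eq_abs, abs_le]
    constructor <;> linarith [neg_one_le_cos (x i), cos_le_one (x i)]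
  rw [← mul_one_div, norm_mul]
  gcongr

theorem mdsCircleCoord_two_mul (θ : ℝ) (j : ℕ) :
    mdsCircleCoord θ (2 * j) = √2 / (2 * j + 1) * cos ((2 * j + 1) * θ) := by
  simp [mdsCircleCoord]

theorem mdsCircleCoord_two_mul_add_one (θ : ℝ) (j : ℕ) :
    mdsCircleCoord θ (2 * j + 1) = √2 / (2 * j + 1) * sin ((2 * j + 1) * θ) := by
  simp [mdsCircleCoord, Nat.add_mod]

theorem mdsCircleCoord_sub_sq_even_add_odd (θ₁ θ₂ : ℝ) (j : ℕ) :
    (mdsCircleCoord θ₁ (2 * j) - mdsCircleCoord θ₂ (2 * j)) ^ 2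
        + (mdsCircleCoord θ₁ (2 * j + 1) - mdsCircleCoord θ₂ (2 * j + 1)) ^ 2
      = 4 * ((1 - cos ((2 * j + 1) * (θ₁ - θ₂))) / (2 * j + 1) ^ 2) := by
  simp only [mdsCircleCoord_two_mul, mdsCircleCoord_two_mul_add_one]
  rw [← mul_sub, ← mul_sub, mul_pow, mul_pow, ← mul_add, cos_sub_cos_sq_add_sin_sub_sin_sq,
    ← mul_sub, div_pow, sq_sqrt zero_le_two]
  ring

theorem hasSum_mdsCircleCoord_sub_sq (θ₁ θ₂ : ℝ) :
    HasSum (fun i ↦ (mdsCircleCoord θ₁ i - mdsCircleCoord θ₂ i) ^ 2)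
      (4 * ∑' j : ℕ, (1 - cos ((2 * j + 1) * (θ₁ - θ₂))) / (2 * j + 1) ^ 2) := by
  refine hasSum_of_hasSum_even_add_odd_of_nonneg (fun _ ↦ sq_nonneg _) ?_
  simp only [mdsCircleCoord_sub_sq_even_add_odd]
  exact (summable_one_sub_cos_div _
    (summable_one_div_two_mul_add_one_pow one_lt_two)).hasSum.mul_left 4

/-- **Proposition.**  For the MDS embedding `γ` of the geodesic circle,
`‖γ(θ₁) − γ(θ₂)‖²_{ℓ²} = 4 ∑_{k odd} (1 − cos(k(θ₁ − θ₂)))/k²`; in particular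
the `ℓ²` distance between `γ(θ₁)` and `γ(θ₂)` depends only on `θ₁ − θ₂`. -/
theorem mds_circle_embedding_distance :
    (∀ θ₁ θ₂ : ℝ,
      ∑' i : ℕ, (mdsCircleCoord θ₁ i - mdsCircleCoord θ₂ i)^2
        = 4 * ∑' j : ℕ,
            (1 - Real.cos ((2 * (j : ℝ) + 1) * (θ₁ - θ₂))) / (2 * (j : ℝ) + 1)^2) ∧
    (∀ θ₁ θ₂ θ₃ θ₄ : ℝ, θ₁ - θ₂ = θ₃ - θ₄ →
      ∑' i : ℕ, (mdsCircleCoord θ₁ i - mdsCircleCoord θ₂ i)^2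
        = ∑' i : ℕ, (mdsCircleCoord θ₃ i - mdsCircleCoord θ₄ i)^2) := by
  refine ⟨fun θ₁ θ₂ ↦ (hasSum_mdsCircleCoord_sub_sq θ₁ θ₂).tsum_eq, fun θ₁ θ₂ θ₃ θ₄ h ↦ ?_⟩
  rw [(hasSum_mdsCircleCoord_sub_sq θ₁ θ₂).tsum_eq, (hasSum_mdsCircleCoord_sub_sq θ₃ θ₄).tsum_eq, h]
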